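/- arXiv:2304.05584 — 3 statements merged into one kernel-verified Lean document; each statement's English description precedes it below -/
import Mathlib

section
/- Let G be a simple graph, let x ≠ y be two vertices of G, and let V_1, …, V_s be subsets of the vertex set of G whose union is all of V(G), such that V_j ∩ V_l = {x, y} for all j ≠ l, and such that every edge of G has both endpoints in a common set V_j. Then for every cycle C of G there exist indices j and l such that all vertices of C lie in V_j ∪ V_l; that is, every cycle of G passes through at most two of the blocks V_1, …, V_s. -/
section CycleBlocks

lemma cb_L {α : Type*} {G : SimpleGraph α} {x y : α} {s : ℕ} {V : Fin s → Set α}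
    (hinter : ∀ j l, j ≠ l → V j ∩ V l = {x, y})
    (hedge : ∀ u v, G.Adj u v → ∃ j, u ∈ V j ∧ v ∈ V j) {u w : α} (p : G.Walk u w) (j : Fin s) :
    u ∈ V j → (∀ z ∈ p.support.dropLast, z ≠ x ∧ z ≠ y) → ∀ z ∈ p.support, z ∈ V j := by
  induction p with
  | nil => intro hu _ z hz; simp at hz; exact hz ▸ hu
  | @cons u v w h q ih =>
    intro hu hz
    rw [SimpleGraph.Walk.support_cons, List.dropLast_cons_of_ne_nil (by simp)] at hz
    obtain ⟨k, hk, hvk⟩ := hedge _ _ h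
    have hkj : k = j := by
      by_contra hne
      have h1 : u ∈ V k ∩ V j := ⟨hk, hu⟩
      rw [hinter k j hne] at h1
      have := hz u (by simp)
      rcases h1 with h1 | h1
      · exact this.1 h1
      · exact this.2 h1
    subst hkj
    have := ih hvk (fun z hz' => hz z (List.mem_cons_of_mem _ hz'))
    intro z hz'
    rw [SimpleGraph.Walk.support_cons, List.mem_cons] at hz'
    rcases hz' with rfl | hz'
    · exact hu
    · exact this z hz'

lemma cb_M {α : Type*} {G : SimpleGraph α} {x y : α} {s : ℕ} {V : Fin s → Set α}
    (hcover : (⋃ j, V j) = Set.univ)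
    (hinter : ∀ j l, j ≠ l → V j ∩ V l = {x, y})
    (hedge : ∀ u v, G.Adj u v → ∃ j, u ∈ V j ∧ v ∈ V j) {u w : α} (p : G.Walk u w)
    (hp : ∀ z ∈ p.support.tail.dropLast, z ≠ x ∧ z ≠ y) : ∃ j, ∀ z ∈ p.support, z ∈ V j := by
  cases p with
  | nil =>
    have : u ∈ ⋃ j, V j := hcover ▸ Set.mem_univ u
    obtain ⟨j, hj⟩ := Set.mem_iUnion.1 this
    exact ⟨j, by simpa using hj⟩
  | cons h q =>
    obtain ⟨k, hk, hvk⟩ := hedge _ _ h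
    have := cb_L hinter hedge q k hvk (by simpa using hp)
    refine ⟨k, fun z hz' => ?_⟩
    rw [SimpleGraph.Walk.support_cons, List.mem_cons] at hz'
    rcases hz' with rfl | hz'
    · exact hk
    · exact this z hz'

lemma cb_F {α : Type*} {G : SimpleGraph α} {u w : α} (p : G.Walk u w)
    (hp : p.support.tail.Nodup) : ∀ z ∈ p.support.tail.dropLast, z ≠ w := by
  cases p with
  | nil => simp
  | cons h q =>
    simp only [SimpleGraph.Walk.support_cons, List.tail_cons] at hp ⊢
    have h1 := List.dropLast_append_getLast (SimpleGraph.Walk.support_ne_nil q)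
    rw [SimpleGraph.Walk.getLast_support] at h1
    rw [← h1, List.nodup_append] at hp
    intro z hz
    exact hp.2.2 z hz w (by simp)

lemma cb_aux {α : Type*} {G : SimpleGraph α} {x y : α} (hxy : x ≠ y) {s : ℕ} {V : Fin s → Set α}
    (hcover : (⋃ j, V j) = Set.univ)
    (hinter : ∀ j l, j ≠ l → V j ∩ V l = {x, y})
    (hedge : ∀ u v, G.Adj u v → ∃ j, u ∈ V j ∧ v ∈ V j) {v : α} (c : G.Walk v v)
    (hc : c.IsCycle) (hx : x ∈ c.support) : ∃ j l, ∀ u ∈ c.support, u ∈ V j ∪ V l := by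
  classical
  suffices H : ∀ c' : G.Walk x x, c'.support.tail.Nodup →
      ∃ j l, ∀ u ∈ c'.support, u ∈ V j ∪ V l by
    obtain ⟨j, l, h⟩ := H (c.rotate x hx) (hc.rotate hx).support_nodup
    exact ⟨j, l, fun u hu => h u ((SimpleGraph.Walk.mem_support_rotate_iff _ _ hx).2 hu)⟩
  intro c' hn
  by_cases hy : y ∈ c'.support
  · have hs := c'.take_spec hy
    generalize c'.takeUntil y hy = p at hs
    generalize c'.dropUntil y hy = q at hs
    subst hs
    rw [SimpleGraph.Walk.tail_support_append, List.nodup_append] at hn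
    obtain ⟨h1, h2, h3⟩ := hn
    have hyp : y ∈ p.support.tail := by
      have := p.end_mem_support
      rw [← SimpleGraph.Walk.cons_tail_support, List.mem_cons] at this
      exact this.resolve_left hxy.symm
    have hxq : x ∈ q.support.tail := by
      have := q.end_mem_support
      rw [← SimpleGraph.Walk.cons_tail_support, List.mem_cons] at this
      exact this.resolve_left hxy
    obtain ⟨j, hj⟩ := cb_M hcover hinter hedge p (fun z hz =>
      ⟨h3 z (List.mem_of_mem_dropLast hz) x hxq, cb_F p h1 z hz⟩)
    obtain ⟨l, hl⟩ := cb_M hcover hinter hedge q (fun z hz =>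
      ⟨cb_F q h2 z hz, (h3 y hyp z (List.mem_of_mem_dropLast hz)).symm⟩)
    refine ⟨j, l, fun u hu => ?_⟩
    rw [SimpleGraph.Walk.mem_support_append_iff] at hu
    exact hu.imp (hj u) (hl u)
  · obtain ⟨j, hj⟩ := cb_M hcover hinter hedge c' (fun z hz => ⟨cb_F c' hn z hz, by
      rintro rfl; exact hy (List.mem_of_mem_tail (List.mem_of_mem_dropLast hz))⟩)
    exact ⟨j, j, fun u hu => Or.inl (hj u hu)⟩

end CycleBlocks

/-- Let `G` be a finite simple graph, `x ≠ y` two vertices, and `V 1, …, V s` subsets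
of the vertex set covering all of `V(G)`, pairwise intersecting exactly in `{x, y}`,
such that every edge of `G` has both endpoints in a common `V j`. Then every cycle of
`G` has all of its vertices inside the union of (at most) two of the blocks. -/
theorem cycle_meets_at_most_two_blocks {α : Type*} [Fintype α] (G : SimpleGraph α)
    (x y : α) (hxy : x ≠ y) (s : ℕ) (V : Fin s → Set α)
    (hcover : (⋃ j, V j) = Set.univ)
    (hinter : ∀ j l, j ≠ l → V j ∩ V l = {x, y})
    (hedge : ∀ u v, G.Adj u v → ∃ j, u ∈ V j ∧ v ∈ V j) :
    ∀ (v : α) (c : G.Walk v v), c.IsCycle →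
      ∃ j l, ∀ u ∈ c.support, u ∈ V j ∪ V l := by
  intro v c hc
  by_cases hx : x ∈ c.support
  · exact cb_aux hxy hcover hinter hedge c hc hx
  by_cases hy : y ∈ c.support
  · exact cb_aux hxy.symm hcover (fun j l h => (hinter j l h).trans (Set.pair_comm x y))
      hedge c hc hy
  obtain ⟨j, hj⟩ := cb_M hcover hinter hedge c (fun z hz => by
    have := List.mem_of_mem_tail (List.mem_of_mem_dropLast hz)
    exact ⟨fun h => hx (h ▸ this), fun h => hy (h ▸ this)⟩)
  exact ⟨j, j, fun u hu => Or.inl (hj u hu)⟩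
end

section
/- Let G be a simple graph, let x ≠ y be two vertices of G, and let V_1, …, V_s be subsets of V(G) whose union is V(G), with V_j ∩ V_l = {x, y} for all j ≠ l, and such that every edge of G has both endpoints in a common V_j. Let a and b be positive integers. If every cycle of the induced subgraph G[V_j] has length at most a for each j, and every path from x to y in G[V_j] has length at most b for each j, then every cycle of G has length at most max(a, 2b). In particular, if a < k and 2b < k, then G contains no cycle of length k. -/
theorem blk_aux {α : Type*} {G : SimpleGraph α} {x y : α} {s : ℕ} {V : Fin s → Set α}
    (hinter : ∀ j l, j ≠ l → V j ∩ V l = {x, y})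
    (hedge : ∀ u v, G.Adj u v → ∃ j, u ∈ V j ∧ v ∈ V j) {u v : α} (p : G.Walk u v) :
    p.IsPath → (∀ w ∈ p.support, w ≠ v → w ≠ x ∧ w ≠ y) → ∀ j, u ∈ V j →
      ∀ w ∈ p.support, w ∈ V j := by
  induction p with
  | nil => intro _ _ j hj w hw; simp at hw; exact hw ▸ hj
  | @cons u u' v h q ih =>
    intro hp hs j hj w hw
    rw [SimpleGraph.Walk.cons_isPath_iff] at hp
    have huv : u ≠ v := fun e => hp.2 (e ▸ q.end_mem_support)
    have hu := hs u (by simp) huv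
    obtain ⟨l, hl, hl'⟩ := hedge _ _ h
    have hlj : l = j := by
      by_contra hne
      have : u ∈ V l ∩ V j := ⟨hl, hj⟩
      rw [hinter l j hne] at this
      rcases this with h | h
      · exact hu.1 h
      · exact hu.2 h
    subst hlj
    rw [SimpleGraph.Walk.support_cons, List.mem_cons] at hw
    rcases hw with rfl | hw
    · exact hj
    · exact ih hp.1 (fun w hw => hs w (by simp [hw])) l hl' w hw

theorem blk_aux2 {α : Type*} {G : SimpleGraph α} {x y : α} {s : ℕ} {V : Fin s → Set α}
    (hinter : ∀ j l, j ≠ l → V j ∩ V l = {x, y})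
    (hedge : ∀ u v, G.Adj u v → ∃ j, u ∈ V j ∧ v ∈ V j) {u u' v : α} (h : G.Adj u u')
    (q : G.Walk u' v) (hq : q.IsPath)
    (hs : ∀ w ∈ q.support, w ≠ v → w ≠ x ∧ w ≠ y) :
    ∃ j, ∀ w ∈ (SimpleGraph.Walk.cons h q).support, w ∈ V j := by
  obtain ⟨j, h1, h2⟩ := hedge _ _ h
  refine ⟨j, fun w hw => ?_⟩
  rw [SimpleGraph.Walk.support_cons, List.mem_cons] at hw
  rcases hw with rfl | hw
  · exact h1
  · exact blk_aux hinter hedge q hq hs j h2 w hw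

/-- A path between `x` and `y` has length at most `b`. -/
theorem blk_path {α : Type*} {G : SimpleGraph α} {x y : α} (hxy : x ≠ y) {s : ℕ}
    {V : Fin s → Set α}
    (hinter : ∀ j l, j ≠ l → V j ∩ V l = {x, y})
    (hedge : ∀ u v, G.Adj u v → ∃ j, u ∈ V j ∧ v ∈ V j) {b : ℕ}
    (hpath : ∀ (j : Fin s) (hx : x ∈ V j) (hy : y ∈ V j)
      (p : (G.induce (V j)).Walk ⟨x, hx⟩ ⟨y, hy⟩), p.IsPath → p.length ≤ b)
    (p : G.Walk x y) (hp : p.IsPath) : p.length ≤ b := by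
  have key : ∃ j, ∀ w ∈ p.support, w ∈ V j := by
    cases p with
    | nil => exact absurd rfl hxy
    | cons h q =>
      rw [SimpleGraph.Walk.cons_isPath_iff] at hp
      exact blk_aux2 hinter hedge h q hp.1 fun w hw hwy => ⟨fun e => hp.2 (e ▸ hw), hwy⟩
  obtain ⟨j, hj⟩ := key
  have e := SimpleGraph.Walk.map_induce p hj
  have := hpath j (hj _ p.start_mem_support) (hj _ p.end_mem_support) (p.induce (V j) hj)
    (by
      rw [← e] at hp
      exact hp.of_map)
  rw [← e]
  exact (SimpleGraph.Walk.length_map _ _).trans_le this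

theorem blk_cyc {α : Type*} {G : SimpleGraph α} {x y : α} {s : ℕ}
    {V : Fin s → Set α}
    (hinter : ∀ j l, j ≠ l → V j ∩ V l = {x, y})
    (hedge : ∀ u v, G.Adj u v → ∃ j, u ∈ V j ∧ v ∈ V j) {a : ℕ}
    (hcyc : ∀ (j : Fin s) (v : V j) (c : (G.induce (V j)).Walk v v),
      c.IsCycle → c.length ≤ a) {v : α}
    (c : G.Walk v v) (hc : c.IsCycle)
    (hs : ∀ w ∈ c.support, w ≠ v → w ≠ x ∧ w ≠ y) : c.length ≤ a := by
  have key : ∃ j, ∀ w ∈ c.support, w ∈ V j := by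
    cases c with
    | nil => exact absurd hc (by simp)
    | cons h q =>
      rw [SimpleGraph.Walk.cons_isCycle_iff] at hc
      exact blk_aux2 hinter hedge h q hc.1 fun w hw => hs w (by simp [hw])
  obtain ⟨j, hj⟩ := key
  have e := SimpleGraph.Walk.map_induce c hj
  have := hcyc j _ (c.induce (V j) hj)
    (by
      rw [← e] at hc
      exact (SimpleGraph.Walk.isCycle_map_iff_of_injective Subtype.val_injective).1 hc)
  rw [← e]
  exact (SimpleGraph.Walk.length_map _ _).trans_le this

/-- Let `G` be a finite simple graph, `x ≠ y` two vertices, and `V 1, …, V s` subsets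
of the vertex set covering all of `V(G)`, pairwise intersecting exactly in `{x, y}`,
such that every edge of `G` has both endpoints in a common `V j`. Let `a, b` be positive
integers. If every cycle of each induced subgraph `G[V j]` has length at most `a`, and
every `x`–`y` path in each `G[V j]` has length at most `b`, then every cycle of `G` has
length at most `max a (2b)`; in particular, if `a < k` and `2b < k`, then `G` contains
no cycle of length `k`. -/
theorem cycle_length_le_of_blocks {α : Type*} [Fintype α] (G : SimpleGraph α)
    (x y : α) (hxy : x ≠ y) (s : ℕ) (V : Fin s → Set α)
    (hcover : (⋃ j, V j) = Set.univ)
    (hinter : ∀ j l, j ≠ l → V j ∩ V l = {x, y})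
    (hedge : ∀ u v, G.Adj u v → ∃ j, u ∈ V j ∧ v ∈ V j)
    (a b : ℕ) (ha : 0 < a) (hb : 0 < b)
    (hcyc : ∀ (j : Fin s) (v : V j) (c : (G.induce (V j)).Walk v v),
      c.IsCycle → c.length ≤ a)
    (hpath : ∀ (j : Fin s) (hx : x ∈ V j) (hy : y ∈ V j)
      (p : (G.induce (V j)).Walk ⟨x, hx⟩ ⟨y, hy⟩), p.IsPath → p.length ≤ b) :
    (∀ (v : α) (c : G.Walk v v), c.IsCycle → c.length ≤ max a (2 * b)) ∧
    (∀ k : ℕ, a < k → 2 * b < k →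
      ∀ (v : α) (c : G.Walk v v), c.IsCycle → c.length ≠ k) := by
  classical
  have main : ∀ (v : α) (c : G.Walk v v), c.IsCycle → c.length ≤ max a (2 * b) := by
    intro v c hc
    by_cases hx : x ∈ c.support
    · by_cases hy : y ∈ c.support
      · refine le_trans ?_ (le_max_right _ _)
        have hc' := hc.rotate hx
        have hy' : y ∈ (c.rotate x hx).support := by
          rwa [SimpleGraph.Walk.mem_support_rotate_iff]
        have hl : (c.rotate x hx).length = c.length := SimpleGraph.Walk.length_rotate ..
        rw [← hl]
        generalize c.rotate x hx = d at hc' hy'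
        have hspec := d.take_spec hy'
        have h1 := blk_path hxy hinter hedge hpath (d.takeUntil y hy')
          (hc'.isPath_takeUntil hy')
        have h2 := blk_path hxy hinter hedge hpath (d.dropUntil y hy').reverse (by
          rw [SimpleGraph.Walk.isPath_reverse_iff]
          rw [← hspec] at hc'
          exact hc'.isPath_of_append_right (by
            exact SimpleGraph.Walk.not_nil_of_ne hxy))
        rw [SimpleGraph.Walk.length_reverse] at h2
        have := congrArg SimpleGraph.Walk.length hspec
        rw [SimpleGraph.Walk.length_append] at this
        omega
      · refine le_trans ?_ (le_max_left _ _)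
        have hl : (c.rotate x hx).length = c.length := SimpleGraph.Walk.length_rotate ..
        rw [← hl]
        refine blk_cyc hinter hedge hcyc _ (hc.rotate hx) fun w hw hwx => ⟨hwx, ?_⟩
        rintro rfl
        rw [SimpleGraph.Walk.mem_support_rotate_iff] at hw
        exact hy hw
    · refine le_trans ?_ (le_max_left _ _)
      by_cases hy : y ∈ c.support
      · have hl : (c.rotate y hy).length = c.length := SimpleGraph.Walk.length_rotate ..
        rw [← hl]
        refine blk_cyc hinter hedge hcyc _ (hc.rotate hy) fun w hw hwy => ⟨?_, hwy⟩
        rintro rfl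
        rw [SimpleGraph.Walk.mem_support_rotate_iff] at hw
        exact hx hw
      · exact blk_cyc hinter hedge hcyc c hc fun w hw _ =>
          ⟨fun e => hx (e ▸ hw), fun e => hy (e ▸ hw)⟩
  refine ⟨main, fun k hak hbk v c hc hk => ?_⟩
  have := main v c hc
  omega
end

section
/- For every integer k ≥ 7 and every integer n with n ≥ (3^i + 5)/2, where i := ⌈log₂(k/3)⌉ − 1 and s := ⌈(n−2)/((3^i + 1)/2)⌉, we have 3n − 6 − (s − 1) ≥ 3n − 6 − 6·3^{log₂ 3}·n / k^{log₂ 3}; equivalently, s − 1 ≤ 6·3^{log₂ 3}·n / k^{log₂ 3}. -/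
/-- For every integer `k ≥ 7` and every integer `n ≥ (3^i + 5)/2`, where
`i := ⌈log₂(k/3)⌉ - 1` and `s := ⌈(n-2)/((3^i + 1)/2)⌉`, we have
`3n - 6 - (s - 1) ≥ 3n - 6 - 6·3^(log₂ 3)·n / k^(log₂ 3)`; equivalently,
`s - 1 ≤ 6·3^(log₂ 3)·n / k^(log₂ 3)`. -/
theorem block_count_bound (k : ℕ) (hk : 7 ≤ k) (n : ℤ)
    (hn : (((3 : ℝ) ^ (⌈Real.logb 2 ((k : ℝ) / 3)⌉ - 1) + 5) / 2) ≤ (n : ℝ)) :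
    let i : ℤ := ⌈Real.logb 2 ((k : ℝ) / 3)⌉ - 1
    let s : ℤ := ⌈((n : ℝ) - 2) / (((3 : ℝ) ^ i + 1) / 2)⌉
    3 * (n : ℝ) - 6 - 6 * (3 : ℝ) ^ (Real.logb 2 3) * (n : ℝ) / (k : ℝ) ^ (Real.logb 2 3) ≤
      3 * (n : ℝ) - 6 - ((s : ℝ) - 1) ∧
    (s : ℝ) - 1 ≤ 6 * (3 : ℝ) ^ (Real.logb 2 3) * (n : ℝ) / (k : ℝ) ^ (Real.logb 2 3) := by
  intro i s
  suffices h : (s : ℝ) - 1 ≤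
      6 * (3 : ℝ) ^ (Real.logb 2 3) * (n : ℝ) / (k : ℝ) ^ (Real.logb 2 3) from
    ⟨by linarith, h⟩
  have hk0 : (0 : ℝ) < k := by
    have : 0 < k := by omega
    exact_mod_cast this
  have hP : (0 : ℝ) < (3 : ℝ) ^ i := by positivity
  have hn' : ((3 : ℝ) ^ i + 5) / 2 ≤ (n : ℝ) := hn
  have hn0 : (0 : ℝ) < n := by linarith
  have hA : (0 : ℝ) < (3 : ℝ) ^ (Real.logb 2 3) := by positivity
  have hK : (0 : ℝ) < (k : ℝ) ^ (Real.logb 2 3) := by positivity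
  have hL : Real.logb 2 ((k : ℝ) / 3) ≤ (i : ℝ) + 1 := by
    have := Int.le_ceil (Real.logb 2 ((k : ℝ) / 3))
    simp only [i]
    push_cast
    linarith
  have hswap : ((k : ℝ) / 3) ^ (Real.logb 2 3) = (3 : ℝ) ^ (Real.logb 2 ((k : ℝ) / 3)) := by
    rw [Real.rpow_def_of_pos (by positivity), Real.rpow_def_of_pos (by norm_num)]
    simp only [Real.logb]
    ring_nf
  have hb : (k : ℝ) ^ (Real.logb 2 3) ≤ 3 * (3 : ℝ) ^ i * (3 : ℝ) ^ (Real.logb 2 3) := by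
    have h1 : (3 : ℝ) ^ (Real.logb 2 ((k : ℝ) / 3)) ≤ (3 : ℝ) ^ ((i : ℝ) + 1) :=
      Real.rpow_le_rpow_of_exponent_le (by norm_num) hL
    rw [Real.rpow_add (by norm_num), Real.rpow_one, Real.rpow_intCast, ← hswap,
      Real.div_rpow hk0.le (by norm_num), div_le_iff₀ hA] at h1
    linarith
  have hs : (s : ℝ) - 1 < ((n : ℝ) - 2) / (((3 : ℝ) ^ i + 1) / 2) := by
    have := Int.ceil_lt_add_one (((n : ℝ) - 2) / (((3 : ℝ) ^ i + 1) / 2))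
    simp only [s]
    linarith
  have h2 : ((n : ℝ) - 2) / (((3 : ℝ) ^ i + 1) / 2) ≤ n / ((3 : ℝ) ^ i / 2) := by
    apply div_le_div₀ hn0.le <;> linarith
  have h3 : (n : ℝ) / ((3 : ℝ) ^ i / 2) ≤
      6 * (3 : ℝ) ^ (Real.logb 2 3) * (n : ℝ) / (k : ℝ) ^ (Real.logb 2 3) := by
    rw [div_le_div_iff₀ (by positivity) hK]
    have := mul_le_mul_of_nonneg_left hb hn0.le
    linarith
  linarith
end
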